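/- arXiv:1511.06099 — 4 statements merged into one kernel-verified Lean document; each statement's English description precedes it below -/
import Mathlib

section
/- There is an absolute constant c > 0 such that the following holds for every integer n ≥ 4 and every ε ∈ [2/n, 1/2]. Suppose (R, ρ, ske, est) is a randomized sketching scheme of size s bits for simple unweighted graphs on n vertices such that for every such graph G and for every subset S of the vertices, with probability at least 9/10 over the seed r drawn from ρ, the value est(S, ske(G,r), r) lies in [(1−ε)·|∂_G(S,S̄)|, (1+ε)·|∂_G(S,S̄)|]. Then s ≥ c·n/ε. -/
open scoped Classical

/-- Number of edges of `G` with exactly one endpoint in `S`. -/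
noncomputable def cutSize {n : ℕ} (G : SimpleGraph (Fin n)) (S : Finset (Fin n)) : ℕ :=
  (Finset.univ.filter (fun p : Fin n × Fin n => p.1 ∈ S ∧ p.2 ∉ S ∧ G.Adj p.1 p.2)).card

noncomputable def sgn (a b : Bool) : ℝ := if a = b then 1 else -1

lemma sum_exp_sgn {ι : Type} [Fintype ι] (t : ℝ) (y : ι → Bool) :
    ∑ x : ι → Bool, Real.exp (t * ∑ i, sgn (y i) (x i)) = (2 * Real.cosh t) ^ Fintype.card ι := by
  have h1 : ∀ x : ι → Bool, Real.exp (t * ∑ i, sgn (y i) (x i))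
      = ∏ i, Real.exp (t * sgn (y i) (x i)) := by
    intro x
    rw [Finset.mul_sum, Real.exp_sum]
  simp_rw [h1]
  have h2 := Finset.prod_univ_sum (fun _ : ι => (Finset.univ : Finset Bool))
    (fun i b => Real.exp (t * sgn (y i) b))
  rw [Fintype.piFinset_univ] at h2
  rw [← h2]
  have h3 : ∀ i, ∑ b : Bool, Real.exp (t * sgn (y i) b) = 2 * Real.cosh t := by
    intro i
    rw [Fintype.sum_bool, Real.cosh_eq]
    cases y i <;> simp [sgn] <;> ring
  simp_rw [h3]
  simp

lemma index_lb {ι : Type} [Fintype ι] (s : ℕ) (R : Type) [Fintype R] (ρ : R → ℝ)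
    (h0 : ∀ r, 0 ≤ ρ r) (h1 : ∑ r : R, ρ r = 1)
    (f : (ι → Bool) → R → (Fin s → Bool)) (g : ι → (Fin s → Bool) → R → Bool)
    (h : ∀ x i, (7 : ℝ) / 10 ≤ ∑ r ∈ Finset.univ.filter (fun r => g i (f x r) r = x i), ρ r) :
    (8 / 100 : ℝ) * Fintype.card ι ≤ s := by
  set N : ℝ := ((Fintype.card ι : ℕ) : ℝ) with hN
  let Z : (ι → Bool) → R → ℝ := fun x r => ∑ i, sgn (g i (f x r) r) (x i)
  have hs : ∀ x i, (4 / 10 : ℝ) ≤ ∑ r, ρ r * sgn (g i (f x r) r) (x i) := by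
    intro x i
    have := h x i
    have e : ∑ r, ρ r * sgn (g i (f x r) r) (x i)
        = 2 * (∑ r ∈ Finset.univ.filter (fun r => g i (f x r) r = x i), ρ r) - ∑ r, ρ r := by
      rw [Finset.sum_filter, Finset.mul_sum, ← Finset.sum_sub_distrib]
      refine Finset.sum_congr rfl fun r _ => ?_
      unfold sgn
      split_ifs <;> ring
    rw [e, h1]; linarith
  have hZ : ∀ x, (4 / 10 : ℝ) * N ≤ ∑ r, ρ r * Z x r := by
    intro x
    have e : ∑ r, ρ r * Z x r = ∑ i, ∑ r, ρ r * sgn (g i (f x r) r) (x i) := by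
      rw [Finset.sum_comm]
      refine Finset.sum_congr rfl fun r _ => ?_
      rw [Finset.mul_sum]
    rw [e]
    calc (4 / 10 : ℝ) * N = ∑ i : ι, (4 / 10 : ℝ) := by simp [hN]; ring
      _ ≤ _ := Finset.sum_le_sum fun i _ => hs x i
  -- lower bound
  have hlow : (2 : ℝ) ^ Fintype.card ι * Real.exp (0.16 * N)
      ≤ ∑ r, ρ r * ∑ x, Real.exp (0.4 * Z x r) := by
    have e : ∑ r, ρ r * ∑ x, Real.exp (0.4 * Z x r)
        = ∑ x, ∑ r, ρ r * Real.exp (0.4 * Z x r) := by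
      rw [Finset.sum_comm]
      refine Finset.sum_congr rfl fun r _ => ?_
      rw [Finset.mul_sum]
    rw [e]
    have hx : ∀ x, Real.exp (0.16 * N) ≤ ∑ r, ρ r * Real.exp (0.4 * Z x r) := by
      intro x
      have hr : ∀ r, ρ r * (Real.exp (0.16 * N) * (1 + (0.4 * Z x r - 0.16 * N)))
          ≤ ρ r * Real.exp (0.4 * Z x r) := by
        intro r
        apply mul_le_mul_of_nonneg_left _ (h0 r)
        have a := Real.add_one_le_exp (0.4 * Z x r - 0.16 * N)
        calc _ ≤ Real.exp (0.16 * N) * Real.exp (0.4 * Z x r - 0.16 * N) := by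
              apply mul_le_mul_of_nonneg_left _ (Real.exp_pos _).le
              linarith
          _ = _ := by rw [← Real.exp_add]; congr 1; ring
      refine le_trans ?_ (Finset.sum_le_sum fun r _ => hr r)
      have e2 : ∑ r, ρ r * (Real.exp (0.16 * N) * (1 + (0.4 * Z x r - 0.16 * N)))
          = Real.exp (0.16 * N) * ((1 - 0.16 * N) * ∑ r, ρ r + 0.4 * ∑ r, ρ r * Z x r) := by
        rw [Finset.mul_sum, Finset.mul_sum, ← Finset.sum_add_distrib, Finset.mul_sum]
        refine Finset.sum_congr rfl fun r _ => ?_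
        ring
      rw [e2, h1]
      have := hZ x
      have hp := Real.exp_pos (0.16 * N)
      apply le_mul_of_one_le_right hp.le
      linarith
    calc _ = ∑ x : ι → Bool, Real.exp (0.16 * N) := by simp
      _ ≤ _ := Finset.sum_le_sum fun x _ => hx x
  have hup : ∑ r, ρ r * ∑ x, Real.exp (0.4 * Z x r)
      ≤ (2 : ℝ) ^ s * (2 * Real.cosh 0.4) ^ Fintype.card ι := by
    have hr : ∀ r, ∑ x, Real.exp (0.4 * Z x r)
        ≤ (2 : ℝ) ^ s * (2 * Real.cosh 0.4) ^ Fintype.card ι := by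
      intro r
      calc ∑ x, Real.exp (0.4 * Z x r)
          ≤ ∑ x : ι → Bool, ∑ w : Fin s → Bool,
              Real.exp (0.4 * ∑ i, sgn (g i w r) (x i)) := by
            refine Finset.sum_le_sum fun x _ => ?_
            exact Finset.single_le_sum
              (f := fun w : Fin s → Bool => Real.exp (0.4 * ∑ i, sgn (g i w r) (x i)))
              (fun w _ => (Real.exp_pos _).le) (Finset.mem_univ (f x r))
        _ = ∑ w : Fin s → Bool, (2 * Real.cosh 0.4) ^ Fintype.card ι := by
            rw [Finset.sum_comm]
            exact Finset.sum_congr rfl fun w _ => sum_exp_sgn 0.4 (fun i => g i w r)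
        _ = _ := by simp
    calc _ ≤ ∑ r, ρ r * ((2 : ℝ) ^ s * (2 * Real.cosh 0.4) ^ Fintype.card ι) :=
          Finset.sum_le_sum fun r _ => mul_le_mul_of_nonneg_left (hr r) (h0 r)
      _ = _ := by rw [← Finset.sum_mul, h1, one_mul]
  have hc : Real.cosh 0.4 ≤ Real.exp 0.08 := by
    have := Real.cosh_le_exp_half_sq 0.4
    norm_num at this ⊢
    exact this
  have hc2 : (Real.cosh 0.4) ^ Fintype.card ι ≤ Real.exp (0.08 * N) := by
    calc _ ≤ (Real.exp 0.08) ^ Fintype.card ι := pow_le_pow_left₀ (Real.cosh_pos _).le hc _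
      _ = _ := by rw [← Real.exp_nat_mul, mul_comm]
  have h2s : (2 : ℝ) ^ s ≤ Real.exp s := by
    have : (2 : ℝ) ≤ Real.exp 1 := by have := Real.add_one_le_exp (1 : ℝ); linarith
    calc _ ≤ (Real.exp 1) ^ s := pow_le_pow_left₀ (by norm_num) this _
      _ = _ := by rw [← Real.exp_nat_mul, mul_one]
  have hfin : (2 : ℝ) ^ Fintype.card ι * Real.exp (0.16 * N)
      ≤ 2 ^ Fintype.card ι * Real.exp (s + 0.08 * N) := by
    refine (hlow.trans hup).trans ?_
    rw [mul_pow, Real.exp_add]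
    calc _ = (2 : ℝ) ^ Fintype.card ι * (2 ^ s * Real.cosh 0.4 ^ Fintype.card ι) := by ring
      _ ≤ _ := by gcongr
  have := Real.exp_le_exp.1 (le_of_mul_le_mul_left hfin (by positivity))
  linarith

lemma cutSize_eq {n : ℕ} (G : SimpleGraph (Fin n)) (u : Fin n) :
    cutSize G {u} = (Finset.univ.filter (fun w => G.Adj u w)).card := by
  unfold cutSize
  symm
  apply Finset.card_bij (fun w _ => (u, w))
  · intro w hw
    simp only [Finset.mem_filter, Finset.mem_univ, true_and] at hw
    simp [hw, hw.ne']
  · intro a _ b _ hab; simpa using hab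
  · rintro ⟨a, b⟩ hab
    simp only [Finset.mem_filter, Finset.mem_univ, true_and, Finset.mem_singleton] at hab
    obtain ⟨rfl, _, h⟩ := hab
    exact ⟨b, by simpa using h, rfl⟩

lemma cutSize_pair {n : ℕ} (G : SimpleGraph (Fin n)) {u v : Fin n} (huv : u ≠ v) :
    cutSize G {u} + cutSize G {v} = cutSize G {u, v} + 2 * (if G.Adj u v then 1 else 0) := by
  have e : cutSize G {u, v} = ((Finset.univ.filter (fun w => G.Adj u w)).erase v).card
      + ((Finset.univ.filter (fun w => G.Adj v w)).erase u).card := by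
    unfold cutSize
    rw [← Finset.card_image_of_injective
        ((Finset.univ.filter (fun w => G.Adj u w)).erase v) (Prod.mk_right_injective u),
      ← Finset.card_image_of_injective
        ((Finset.univ.filter (fun w => G.Adj v w)).erase u) (Prod.mk_right_injective v),
      ← Finset.card_union_of_disjoint]
    · congr 1
      ext ⟨a, b⟩
      simp only [Finset.mem_filter, Finset.mem_univ, true_and, Finset.mem_insert,
        Finset.mem_singleton, Finset.mem_union, Finset.mem_image, Finset.mem_erase, Prod.mk.injEq]
      constructor
      · rintro ⟨rfl | rfl, h2, h3⟩
        · exact Or.inl ⟨b, ⟨fun h => h2 (Or.inr h), h3⟩, rfl, rfl⟩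
        · exact Or.inr ⟨b, ⟨fun h => h2 (Or.inl h), h3⟩, rfl, rfl⟩
      · rintro (⟨w, ⟨h1, h2⟩, rfl, rfl⟩ | ⟨w, ⟨h1, h2⟩, rfl, rfl⟩)
        · exact ⟨Or.inl rfl, by rintro (h | h); exacts [h2.ne' h, h1 h], h2⟩
        · exact ⟨Or.inr rfl, by rintro (h | h); exacts [h1 h, h2.ne' h], h2⟩
    · rw [Finset.disjoint_left]
      rintro ⟨a, b⟩ h1 h2
      simp only [Finset.mem_image, Prod.mk.injEq] at h1 h2
      obtain ⟨_, _, rfl, _⟩ := h1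
      obtain ⟨_, _, h, _⟩ := h2
      exact huv h.symm
  rw [e, cutSize_eq, cutSize_eq]
  by_cases h : G.Adj u v
  · have m1 : v ∈ Finset.univ.filter (fun w => G.Adj u w) := by simpa using h
    have m2 : u ∈ Finset.univ.filter (fun w => G.Adj v w) := by simpa using h.symm
    rw [← Finset.card_erase_add_one m1, ← Finset.card_erase_add_one m2]
    simp [h]; ring
  · rw [Finset.erase_eq_of_notMem (by simpa using h),
      Finset.erase_eq_of_notMem (by simpa using fun h' => h (G.adj_symm h'))]
    simp [h]

lemma cutSize_le {n k : ℕ} (G : SimpleGraph (Fin n)) {u v : Fin n} (A : Finset (Fin n))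
    (hA : A.card ≤ k) (hv : v ∈ A) (hsub : ∀ w, G.Adj u w → w ∈ A) :
    cutSize G {u} + 1 ≤ k + (if G.Adj u v then 1 else 0) := by
  rw [cutSize_eq]
  by_cases h : G.Adj u v
  · simp only [h, if_true]
    have : (Finset.univ.filter (fun w => G.Adj u w)).card ≤ A.card :=
      Finset.card_le_card fun w hw => hsub w (by simpa using hw)
    omega
  · simp only [h, if_false]
    have : (Finset.univ.filter (fun w => G.Adj u w)).card ≤ (A.erase v).card := by
      refine Finset.card_le_card fun w hw => ?_
      have hw' : G.Adj u w := by simpa using hw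
      rw [Finset.mem_erase]
      exact ⟨fun e => h (e ▸ hw'), hsub w hw'⟩
    have h2 := Finset.card_erase_add_one hv
    omega

/-- Disjoint union of bipartite graphs given by bits. -/
def blockGraph {n m k : ℕ} (e : (Fin m × Fin k) × Bool ↪ Fin n)
    (x : Fin m × Fin k × Fin k → Bool) : SimpleGraph (Fin n) :=
  SimpleGraph.fromRel fun a b => ∃ i j l, x (i, j, l) = true ∧ a = e ((i, j), false) ∧
    b = e ((i, l), true)

lemma block_adj_left {n m k : ℕ} (e : (Fin m × Fin k) × Bool ↪ Fin n)
    (x : Fin m × Fin k × Fin k → Bool) (i : Fin m) (j : Fin k) (w : Fin n) :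
    (blockGraph e x).Adj (e ((i, j), false)) w ↔ ∃ l, x (i, j, l) = true ∧ w = e ((i, l), true) := by
  unfold blockGraph
  rw [SimpleGraph.fromRel_adj]
  constructor
  · rintro ⟨_, ⟨i', j', l', h, h1, h2⟩ | ⟨i', j', l', h, h1, h2⟩⟩
    · have := e.injective h1
      simp only [Prod.mk.injEq, and_true] at this
      obtain ⟨rfl, rfl⟩ := this
      exact ⟨l', h, h2⟩
    · have := e.injective h2
      simp at this
  · rintro ⟨l, h, rfl⟩
    refine ⟨fun h' => ?_, Or.inl ⟨i, j, l, h, rfl, rfl⟩⟩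
    have := e.injective h'
    simp at this

lemma block_adj_right {n m k : ℕ} (e : (Fin m × Fin k) × Bool ↪ Fin n)
    (x : Fin m × Fin k × Fin k → Bool) (i : Fin m) (l : Fin k) (w : Fin n)
    (hw : (blockGraph e x).Adj (e ((i, l), true)) w) : ∃ j, w = e ((i, j), false) := by
  unfold blockGraph at hw
  rw [SimpleGraph.fromRel_adj] at hw
  obtain ⟨_, ⟨i', j', l', h, h1, h2⟩ | ⟨i', j', l', h, h1, h2⟩⟩ := hw
  · have := e.injective h1
    simp at this
  · have := e.injective h2
    simp only [Prod.mk.injEq, and_true] at this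
    obtain ⟨rfl, rfl⟩ := this
    exact ⟨j', h1⟩

lemma block_adj {n m k : ℕ} (e : (Fin m × Fin k) × Bool ↪ Fin n)
    (x : Fin m × Fin k × Fin k → Bool) (i : Fin m) (j l : Fin k) :
    (blockGraph e x).Adj (e ((i, j), false)) (e ((i, l), true)) ↔ x (i, j, l) = true := by
  rw [block_adj_left]
  constructor
  · rintro ⟨l', h, h1⟩
    have := e.injective h1
    simp only [Prod.mk.injEq, and_true, true_and] at this
    rwa [this]
  · exact fun h => ⟨l, h, rfl⟩

lemma sum_inter3 {R : Type} [Fintype R] (ρ : R → ℝ) (h0 : ∀ r, 0 ≤ ρ r) (h1 : ∑ r : R, ρ r = 1)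
    (P Q T W : R → Prop) [DecidablePred P] [DecidablePred Q]
    [DecidablePred T] [DecidablePred W] (hW : ∀ r, P r → Q r → T r → W r)
    (hP : (9 : ℝ) / 10 ≤ ∑ r ∈ Finset.univ.filter P, ρ r)
    (hQ : (9 : ℝ) / 10 ≤ ∑ r ∈ Finset.univ.filter Q, ρ r)
    (hT : (9 : ℝ) / 10 ≤ ∑ r ∈ Finset.univ.filter T, ρ r) :
    (7 : ℝ) / 10 ≤ ∑ r ∈ Finset.univ.filter W, ρ r := by
  rw [Finset.sum_filter] at *
  have : ∑ r, ((if P r then ρ r else 0) + (if Q r then ρ r else 0) + (if T r then ρ r else 0))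
      ≤ ∑ r, ((if W r then ρ r else 0) + 2 * ρ r) := by
    refine Finset.sum_le_sum fun r _ => ?_
    have := h0 r
    have := hW r
    by_cases p : P r <;> by_cases q : Q r <;> by_cases t : T r <;> by_cases w : W r <;>
      simp [p, q, t, w] at * <;> linarith
  rw [Finset.sum_add_distrib, Finset.sum_add_distrib, Finset.sum_add_distrib, ← Finset.mul_sum,
    h1] at this
  linarith

lemma decode {ε : ℝ} (h0 : 0 < ε) {k a b c : ℕ} {p : Prop} (hk : ε * (4 * k - 2) ≤ 1)
    (hab : a + b = c + 2 * (if p then 1 else 0))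
    (ha : a + 1 ≤ k + (if p then 1 else 0)) (hb : b + 1 ≤ k + (if p then 1 else 0))
    {A B C : ℝ} (hA : (1 - ε) * a ≤ A ∧ A ≤ (1 + ε) * a) (hB : (1 - ε) * b ≤ B ∧ B ≤ (1 + ε) * b)
    (hC : (1 - ε) * c ≤ C ∧ C ≤ (1 + ε) * c) : 1 ≤ A + B - C ↔ p := by
  by_cases h : p
  · simp only [h, if_true, iff_true] at *
    have e1 : (a : ℝ) + b = c + 2 := by exact_mod_cast hab
    have e2 : (a : ℝ) ≤ k := by exact_mod_cast (by omega : a ≤ k)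
    have e3 : (b : ℝ) ≤ k := by exact_mod_cast (by omega : b ≤ k)
    have : ε * (a + b + c) ≤ ε * (4 * k - 2) := mul_le_mul_of_nonneg_left (by linarith) h0.le
    nlinarith
  · simp only [h, if_false, iff_false, not_le] at *
    have e1 : (a : ℝ) + b = c := by exact_mod_cast hab
    have e2 : (a : ℝ) + 1 ≤ k := by exact_mod_cast ha
    have e3 : (b : ℝ) + 1 ≤ k := by exact_mod_cast hb
    have : ε * (a + b + c) ≤ ε * (4 * k - 4) := mul_le_mul_of_nonneg_left (by linarith) h0.le
    nlinarith

lemma params (n : ℕ) (hn : 4 ≤ n) (ε : ℝ) (h1 : 2 / (n : ℝ) ≤ ε) (h2 : ε ≤ 1 / 2) :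
    ∃ m k : ℕ, m * k * 2 ≤ n ∧ ε * (4 * k - 2) ≤ 1 ∧ (n : ℝ) / (32 * ε) ≤ (m * (k * k) : ℕ) := by
  have hn0 : (4 : ℝ) ≤ n := by exact_mod_cast hn
  have h0 : 0 < ε := lt_of_lt_of_le (by positivity) h1
  have hinv : 2 ≤ 1 / ε := by rw [le_div_iff₀ h0]; linarith
  have hinv2 : 1 / ε ≤ n / 2 := by
    rw [div_le_iff₀ h0]
    rw [div_le_iff₀ (by linarith)] at h1
    linarith
  set k := ⌊(1 / ε + 2) / 4⌋₊ with hk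
  have k1 : 1 ≤ k := Nat.le_floor (by push_cast; linarith)
  have k2 : (k : ℝ) ≤ (1 / ε + 2) / 4 := Nat.floor_le (by positivity)
  have k3 : (1 / ε + 2) / 4 < k + 1 := Nat.lt_floor_add_one _
  have k1' : (1 : ℝ) ≤ k := by exact_mod_cast k1
  have k4 : 4 * k ≤ n := by
    have : (4 * k : ℝ) ≤ n := by linarith
    exact_mod_cast this
  refine ⟨n / (2 * k), k, ?_, ?_, ?_⟩
  · have := Nat.div_mul_le_self n (2 * k)
    nlinarith
  · have : ε * (4 * k - 2) ≤ ε * (1 / ε) := mul_le_mul_of_nonneg_left (by linarith) h0.le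
    rwa [mul_one_div_cancel h0.ne'] at this
  · set m := n / (2 * k) with hm
    have m1 : n < 2 * k * (m + 1) := Nat.lt_mul_div_succ n (by omega)
    have m2 : 1 ≤ m := (Nat.one_le_div_iff (by omega)).2 (by omega)
    have m3 : n ≤ 4 * (m * k) := by nlinarith
    have m4 : (n : ℝ) ≤ 4 * (m * k) := by exact_mod_cast m3
    have e : (n : ℝ) / (32 * ε) = n * (1 / ε) / 32 := by field_simp
    rw [e]
    have : 1 / ε ≤ 8 * k := by linarith
    push_cast
    calc (n : ℝ) * (1 / ε) / 32 ≤ (4 * (m * k)) * (8 * k) / 32 := by gcongr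
      _ = _ := by ring

theorem stmt_10 :
    ∃ c : ℝ, 0 < c ∧
      ∀ (n : ℕ), 4 ≤ n → ∀ ε : ℝ, 2 / (n : ℝ) ≤ ε → ε ≤ 1 / 2 →
      ∀ (s : ℕ) (R : Type) [Fintype R] (ρ : R → ℝ),
        (∀ r, 0 ≤ ρ r) → (∑ r : R, ρ r) = 1 →
        ∀ (ske : SimpleGraph (Fin n) → R → (Fin s → Bool))
          (est : Finset (Fin n) → (Fin s → Bool) → R → ℝ),
          (∀ G : SimpleGraph (Fin n), ∀ S : Finset (Fin n),
            (9 : ℝ) / 10 ≤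
              ∑ r ∈ Finset.univ.filter (fun r : R =>
                (1 - ε) * (cutSize G S : ℝ) ≤ est S (ske G r) r ∧
                  est S (ske G r) r ≤ (1 + ε) * (cutSize G S : ℝ)), ρ r) →
          c * n / ε ≤ (s : ℝ) := by
  refine ⟨1 / 400, by norm_num, ?_⟩
  intro n hn ε h1 h2 s R _ ρ h0 hsum ske est H
  obtain ⟨m, k, hmk, hk, hN⟩ := params n hn ε h1 h2
  have hn0 : (0 : ℝ) < n := by exact_mod_cast (by omega : 0 < n)
  have hε : 0 < ε := lt_of_lt_of_le (by positivity) h1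
  have hcard : Fintype.card ((Fin m × Fin k) × Bool) ≤ Fintype.card (Fin n) := by
    simpa using hmk
  obtain ⟨e⟩ := Function.Embedding.nonempty_of_card_le hcard
  have key := index_lb (ι := Fin m × Fin k × Fin k) s R ρ h0 hsum
    (fun x r => ske (blockGraph e x) r)
    (fun p w r => decide (1 ≤ est {e ((p.1, p.2.1), false)} w r + est {e ((p.1, p.2.2), true)} w r
      - est {e ((p.1, p.2.1), false), e ((p.1, p.2.2), true)} w r)) ?_
  · have hc : Fintype.card (Fin m × Fin k × Fin k) = m * (k * k) := by simp
    rw [hc] at key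
    have e1 : 1 / 400 * (n : ℝ) / ε = 8 / 100 * (n / (32 * ε)) := by field_simp; norm_num
    rw [e1]
    linarith
  · rintro x ⟨i, j, l⟩
    have huv : e ((i, j), false) ≠ e ((i, l), true) := by
      intro h
      have := e.injective h
      simp at this
    refine sum_inter3 ρ h0 hsum _ _ _ _ ?_ (H (blockGraph e x) {e ((i, j), false)})
      (H (blockGraph e x) {e ((i, l), true)})
      (H (blockGraph e x) {e ((i, j), false), e ((i, l), true)})
    intro r hA hB hC
    have hu := cutSize_le (k := k) (blockGraph e x) (u := e ((i, j), false)) (v := e ((i, l), true))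
      (Finset.univ.image fun l => e ((i, l), true))
      (Finset.card_image_le.trans (by simp)) (by simp)
      (fun w hw => by
        obtain ⟨l', _, rfl⟩ := (block_adj_left e x i j w).1 hw
        simp)
    have hv := cutSize_le (k := k) (blockGraph e x) (v := e ((i, j), false)) (u := e ((i, l), true))
      (Finset.univ.image fun j => e ((i, j), false))
      (Finset.card_image_le.trans (by simp)) (by simp)
      (fun w hw => by
        obtain ⟨l', rfl⟩ := block_adj_right e x i l w hw
        simp)
    simp only [(blockGraph e x).adj_comm (e ((i, l), true)) (e ((i, j), false))] at hv
    have hd := decode hε hk (cutSize_pair (blockGraph e x) huv) hu hv hA hB hC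
    rw [block_adj] at hd
    rw [Bool.eq_iff_iff, decide_eq_true_iff]
    exact hd
end

section
/- For every finite simple undirected graph G = (V, E) and every real number s > 1, there exists an orientation of the edges of G such that, in the resulting directed graph, every directed edge (u, v) satisfies: the out-degree of u is less than s, or the out-degree of v is at least s − 1. -/
open scoped Classical

/-- Out-degree of `u` in the orientation `D`. -/
noncomputable def outdeg {V : Type} [Fintype V] (D : V → V → Bool) (u : V) : ℕ :=
  (Finset.univ.filter (fun v => D u v = true)).card

theorem stmt_12 (V : Type) [Fintype V] [DecidableEq V] (G : SimpleGraph V)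
    (s : ℝ) (hs : 1 < s) :
    ∃ D : V → V → Bool,
      -- `D` is an orientation of `G`: each edge gets exactly one direction
      (∀ u v, (G.Adj u v ↔ (D u v = true ∨ D v u = true)) ∧
        ¬ (D u v = true ∧ D v u = true)) ∧
      -- every directed edge (u, v) has outdeg u < s or outdeg v ≥ s - 1
      (∀ u v, D u v = true →
        ((outdeg D u : ℝ) < s ∨ s - 1 ≤ (outdeg D v : ℝ))) := by
  let P : (V → V → Bool) → Prop := fun D =>
    ∀ u v, (G.Adj u v ↔ (D u v = true ∨ D v u = true)) ∧ ¬ (D u v = true ∧ D v u = true)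
  have hne : ∃ D, P D := by
    let e := Fintype.equivFin V
    refine ⟨fun a b => decide (G.Adj a b ∧ e a < e b), fun u v => ?_⟩
    simp only [decide_eq_true_eq]
    refine ⟨⟨fun h => ?_, ?_⟩, ?_⟩
    · rcases lt_trichotomy (e u) (e v) with h1 | h1 | h1
      · exact Or.inl ⟨h, h1⟩
      · exact absurd (e.injective h1) h.ne
      · exact Or.inr ⟨h.symm, h1⟩
    · rintro (h | h)
      · exact h.1
      · exact h.1.symm
    · rintro ⟨h, h'⟩
      exact lt_asymm h.2 h'.2
  obtain ⟨D, hD, hmin⟩ := Finset.exists_min_image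
    (Finset.univ.filter P) (fun D => ∑ x, outdeg D x ^ 2)
    (by obtain ⟨D, hD⟩ := hne; exact ⟨D, by simpa using hD⟩)
  have hP : P D := by simpa using hD
  refine ⟨D, hP, fun u v huv => ?_⟩
  by_contra! hcon
  have hlt : outdeg D v + 1 < outdeg D u := by
    have : (outdeg D v : ℝ) + 1 < outdeg D u := by linarith [hcon.1, hcon.2]
    exact_mod_cast this
  have hvu : ¬ D v u = true := fun h => (hP u v).2 ⟨huv, h⟩
  have huv' : u ≠ v := by
    rintro rfl
    exact hvu huv
  let D' : V → V → Bool := fun a b =>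
    if a = u ∧ b = v then false else if a = v ∧ b = u then true else D a b
  have hP' : P D' := by
    intro a b
    have h1 := hP a b
    have h2 := hP u v
    simp only [D']
    grind
  have hu : outdeg D' u + 1 = outdeg D u := by
    have h1 : (Finset.univ.filter (fun b => D' u b = true))
        = (Finset.univ.filter (fun b => D u b = true)).erase v := by
      ext b
      simp only [D', Finset.mem_filter, Finset.mem_erase, Finset.mem_univ]
      grind
    unfold outdeg
    rw [h1]
    exact Finset.card_erase_add_one (by simpa using huv)
  have hv : outdeg D' v = outdeg D v + 1 := by
    have h1 : (Finset.univ.filter (fun b => D' v b = true))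
        = insert u (Finset.univ.filter (fun b => D v b = true)) := by
      ext b
      simp only [D', Finset.mem_filter, Finset.mem_insert, Finset.mem_univ]
      grind
    unfold outdeg
    rw [h1]
    exact Finset.card_insert_of_notMem (by simpa using hvu)
  have ho : ∀ x, x ≠ u → x ≠ v → outdeg D' x = outdeg D x := by
    intro x h1 h2
    simp [outdeg, D', h1, h2]
  have hm := hmin D' (by simpa using hP')
  have hsplit : ∀ f : V → ℕ, ∑ x, f x = f u + (f v + ∑ x ∈ (Finset.univ.erase u).erase v, f x) := by
    intro f
    rw [Finset.add_sum_erase _ f (by simp [huv'.symm]), Finset.add_sum_erase _ f (by simp)]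
  have hrest : ∑ x ∈ (Finset.univ.erase u).erase v, outdeg D' x ^ 2
      = ∑ x ∈ (Finset.univ.erase u).erase v, outdeg D x ^ 2 := by
    refine Finset.sum_congr rfl fun x hx => ?_
    simp only [Finset.mem_erase] at hx
    rw [ho x hx.2.1 hx.1]
  rw [hsplit, hsplit (fun x => outdeg D' x ^ 2), hrest, hv, ← hu] at hm
  rw [← hu] at hlt
  nlinarith
end

section
/- Let s > 1 be a real number and let G = (V, E) be a finite simple undirected graph with |V| = n vertices and |E| = m ≤ s·n edges. Suppose the edges of G are oriented so that every directed edge (u, v) satisfies: the out-degree of u is less than 2s, or the out-degree of v is at least 2s − 1 (out-degrees taken in the full orientation). Let E_r be the set of directed edges (u, v) whose tail satisfies out-degree of u at least 2s. Then the number of vertices incident to at least one edge of E_r is at most s·n/(2s − 1) = n/(2 − 1/s). -/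
open scoped Classical

/-- The set of directed edges whose tail has out-degree at least `2s`. -/
noncomputable def Er {V : Type} [Fintype V] (D : V → V → Bool) (s : ℝ) :
    Finset (V × V) :=
  Finset.univ.filter (fun p : V × V => D p.1 p.2 = true ∧ 2 * s ≤ (outdeg D p.1 : ℝ))

theorem stmt_13 (V : Type) [Fintype V] [DecidableEq V]
    (s : ℝ) (hs : 1 < s)
    (D : V → V → Bool)
    -- `D` is an orientation of a simple graph: no pair is oriented both ways
    (hdisj : ∀ u v, ¬ (D u v = true ∧ D v u = true))
    -- the graph has m ≤ s·n edges (each undirected edge is one directed pair):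
    (hm : ((Finset.univ.filter (fun p : V × V => D p.1 p.2 = true)).card : ℝ)
        ≤ s * (Fintype.card V : ℝ))
    -- every directed edge (u,v): outdeg u < 2s or outdeg v ≥ 2s − 1:
    (hprop : ∀ u v, D u v = true →
      ((outdeg D u : ℝ) < 2 * s ∨ 2 * s - 1 ≤ (outdeg D v : ℝ))) :
    ((Finset.univ.filter (fun v : V =>
        ∃ p ∈ Er D s, p.1 = v ∨ p.2 = v)).card : ℝ)
      ≤ (Fintype.card V : ℝ) / (2 - 1 / s) := by
  set S := Finset.univ.filter (fun v : V => ∃ p ∈ Er D s, p.1 = v ∨ p.2 = v) with hS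
  have hdeg : ∀ v ∈ S, 2 * s - 1 ≤ (outdeg D v : ℝ) := by
    intro v hv
    obtain ⟨p, hp, h⟩ := (Finset.mem_filter.mp hv).2
    obtain ⟨h1, h2⟩ := (Finset.mem_filter.mp hp).2
    rcases h with rfl | rfl
    · linarith
    · rcases hprop _ _ h1 with h3 | h3
      · linarith
      · exact h3
  have hsum : (Finset.univ.filter (fun p : V × V => D p.1 p.2 = true)).card
      = ∑ u, outdeg D u := by
    simp only [outdeg, Finset.card_filter]
    rw [Fintype.sum_prod_type]
  have h1 : (S.card : ℝ) * (2 * s - 1) ≤ s * (Fintype.card V : ℝ) := by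
    calc (S.card : ℝ) * (2 * s - 1) = ∑ v ∈ S, (2 * s - 1) := by
          rw [Finset.sum_const, nsmul_eq_mul]
      _ ≤ ∑ v ∈ S, (outdeg D v : ℝ) := Finset.sum_le_sum hdeg
      _ ≤ ∑ v, (outdeg D v : ℝ) :=
          Finset.sum_le_sum_of_subset_of_nonneg (Finset.subset_univ _)
            (fun _ _ _ => Nat.cast_nonneg _)
      _ ≤ s * (Fintype.card V : ℝ) := by
          rw [hsum] at hm
          push_cast at hm
          exact hm
  have hs0 : 0 < s := by linarith
  have h2 : (2 - 1 / s) = (2 * s - 1) / s := by field_simp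
  rw [h2, div_div_eq_mul_div, le_div_iff₀ (by linarith)]
  linarith
end

section
/- There exist constants ε₀ > 0, c > 0 and C > 0 such that for every sufficiently large integer n and every ε ∈ (0, ε₀) the following holds. Suppose (R, ρ, ske, est) is a randomized sketching scheme of size s bits for n×n real symmetric positive semidefinite matrices A all of whose entries lie in the grid {−1, −1 + 1/n^C, −1 + 2/n^C, ..., 1 − 1/n^C, 1}, such that for every such matrix A, with probability at least 2/3 over the seed r drawn from ρ, simultaneously for all x ∈ ℝⁿ the value est(x, ske(A,r), r) lies in [(1−ε)·xᵀAx, (1+ε)·xᵀAx]. Then s ≥ c·n². -/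
open scoped Classical

/-- The quadratic form `xᵀ A x` of a matrix. -/
noncomputable def qfM {n : ℕ} (A : Matrix (Fin n) (Fin n) ℝ) (x : Fin n → ℝ) : ℝ :=
  ∑ i, ∑ j, x i * A i j * x j

/-- Block matrix with an identity block above a Boolean block. -/
def WB {m p : ℕ} (M : Fin p → Fin m → Bool) (t : Fin m ⊕ Fin p) (k : Fin m) : ℕ :=
  Sum.elim (fun a => if a = k then 1 else 0) (fun b => if M b k then 1 else 0) t

theorem WB_le {m p : ℕ} (M : Fin p → Fin m → Bool) (t : Fin m ⊕ Fin p) (k : Fin m) :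
    WB M t k ≤ 1 := by
  cases t <;> simp only [WB, Sum.elim_inl, Sum.elim_inr] <;> split_ifs <;> simp

/-- The (scaled) Gram matrix of the rows of the block matrix. -/
noncomputable def AB {n m p : ℕ} (e : Fin n ≃ Fin m ⊕ Fin p) (M : Fin p → Fin m → Bool) :
    Matrix (Fin n) (Fin n) ℝ :=
  fun i j => ((∑ k, WB M (e i) k * WB M (e j) k : ℕ) : ℝ) / n

theorem qfM_AB {n m p : ℕ} (e : Fin n ≃ Fin m ⊕ Fin p) (M : Fin p → Fin m → Bool)
    (x : Fin n → ℝ) :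
    qfM (AB e M) x = (∑ k, (∑ i, (WB M (e i) k : ℝ) * x i) ^ 2) / n := by
  have h : ∀ k, (∑ i, (WB M (e i) k : ℝ) * x i) ^ 2
      = ∑ i, ∑ j, ((WB M (e i) k : ℝ) * x i) * ((WB M (e j) k : ℝ) * x j) := by
    intro k
    rw [sq, Finset.sum_mul_sum]
  simp only [h]
  rw [Finset.sum_comm, Finset.sum_div]
  unfold qfM
  refine Finset.sum_congr rfl fun i _ => ?_
  rw [Finset.sum_comm, Finset.sum_div]
  refine Finset.sum_congr rfl fun j _ => ?_
  unfold AB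
  push_cast
  rw [mul_div_assoc', div_mul_eq_mul_div, Finset.mul_sum, Finset.sum_mul]
  congr 1
  refine Finset.sum_congr rfl fun k _ => ?_
  ring

theorem AB_sep {n m p : ℕ} (hn : 0 < n) (e : Fin n ≃ Fin m ⊕ Fin p)
    (M M' : Fin p → Fin m → Bool) (h : M ≠ M') :
    ∃ x, qfM (AB e M) x = 0 ∧ 0 < qfM (AB e M') x := by
  have : ∃ b k, M b k ≠ M' b k := by
    by_contra! hc
    exact h (funext fun b => funext fun k => hc b k)
  obtain ⟨b, k, hbk⟩ := this
  let y : Fin m ⊕ Fin p → ℝ :=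
    Sum.elim (fun a => - (if M b a then 1 else 0)) (fun c => if c = b then 1 else 0)
  have key : ∀ (N : Fin p → Fin m → Bool) (l : Fin m),
      ∑ i, (WB N (e i) l : ℝ) * y (e i)
        = (if N b l then 1 else 0) - (if M b l then 1 else 0) := by
    intro N l
    rw [Equiv.sum_comp e (fun t => (WB N t l : ℝ) * y t), Fintype.sum_sum_type]
    have s1 : ∑ a, (WB N (Sum.inl a) l : ℝ) * y (Sum.inl a) = - (if M b l then 1 else 0) := by
      rw [Finset.sum_eq_single l]
      · simp [WB, y]
      · intro a _ ha
        simp [WB, ha]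
      · simp
    have s2 : ∑ c, (WB N (Sum.inr c) l : ℝ) * y (Sum.inr c) = if N b l then 1 else 0 := by
      rw [Finset.sum_eq_single b]
      · simp [WB, y]
      · intro a _ ha
        simp [y, ha]
      · simp
    rw [s1, s2]
    ring
  refine ⟨fun i => y (e i), ?_, ?_⟩
  · rw [qfM_AB]
    simp [key]
  · rw [qfM_AB]
    simp only [key]
    refine div_pos (Finset.sum_pos' (fun _ _ => sq_nonneg _) ⟨k, Finset.mem_univ _, ?_⟩)
      (by exact_mod_cast hn)
    cases h1 : M b k <;> cases h2 : M' b k <;> simp_all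

theorem stmt_16 :
    ∃ ε₀ c C : ℝ, 0 < ε₀ ∧ 0 < c ∧ 0 < C ∧
      ∃ n₀ : ℕ, ∀ n : ℕ, n₀ ≤ n → ∀ ε : ℝ, 0 < ε → ε < ε₀ →
      ∀ (s : ℕ) (R : Type) [Fintype R] (ρ : R → ℝ),
        (∀ r, 0 ≤ ρ r) → (∑ r : R, ρ r) = 1 →
        ∀ (ske : Matrix (Fin n) (Fin n) ℝ → R → (Fin s → Bool))
          (est : (Fin n → ℝ) → (Fin s → Bool) → R → ℝ),
          (∀ A : Matrix (Fin n) (Fin n) ℝ,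
            (∀ i j, A i j = A j i) →
            (∀ x : Fin n → ℝ, 0 ≤ qfM A x) →
            (∀ i j, ∃ z : ℕ, A i j = -1 + (z : ℝ) / (n : ℝ) ^ C ∧
              (z : ℝ) ≤ 2 * (n : ℝ) ^ C) →
            (2 : ℝ) / 3 ≤
              ∑ r ∈ Finset.univ.filter (fun r : R =>
                ∀ x : Fin n → ℝ,
                  (1 - ε) * qfM A x ≤ est x (ske A r) r ∧
                    est x (ske A r) r ≤ (1 + ε) * qfM A x), ρ r) →
          c * (n : ℝ) ^ 2 ≤ (s : ℝ) := by
  refine ⟨1, 1 / 8, 1, one_pos, by norm_num, one_pos, 4, ?_⟩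
  intro n hn ε hε hε1 s R _ ρ hρ hρ1 ske est H
  have hn0 : 0 < n := by omega
  have hnR : (0 : ℝ) < n := by exact_mod_cast hn0
  obtain ⟨m, p, hmp, hcard⟩ : ∃ m p : ℕ, m + p = n ∧ n * n ≤ 4 * (p * m) + 1 := by
    refine ⟨n / 2, n - n / 2, by omega, ?_⟩
    rcases Nat.even_or_odd' n with ⟨q, rfl | rfl⟩
    · rw [show 2 * q / 2 = q by omega, show 2 * q - q = q by omega]
      nlinarith
    · rw [show (2 * q + 1) / 2 = q by omega, show 2 * q + 1 - q = q + 1 by omega]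
      nlinarith
  let e : Fin n ≃ Fin m ⊕ Fin p := (finCongr hmp.symm).trans finSumFinEquiv.symm
  let P : (Fin p → Fin m → Bool) → R → Prop := fun M r => ∀ x : Fin n → ℝ,
    (1 - ε) * qfM (AB e M) x ≤ est x (ske (AB e M) r) r ∧
      est x (ske (AB e M) r) r ≤ (1 + ε) * qfM (AB e M) x
  have hgood : ∀ M, (2 : ℝ) / 3 ≤ ∑ r ∈ Finset.univ.filter (fun r : R => P M r), ρ r := by
    intro M
    refine H (AB e M) ?_ ?_ ?_
    · intro i j
      simp only [AB, mul_comm]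
    · intro x
      rw [qfM_AB]
      positivity
    · intro i j
      refine ⟨n + ∑ k, WB M (e i) k * WB M (e j) k, ?_, ?_⟩
      · rw [Real.rpow_one, Nat.cast_add, add_div, div_self hnR.ne']
        simp only [AB]
        ring
      · rw [Real.rpow_one]
        have : ∑ k, WB M (e i) k * WB M (e j) k ≤ ∑ k : Fin m, 1 :=
          Finset.sum_le_sum fun k _ => by
            simpa using Nat.mul_le_mul (WB_le M (e i) k) (WB_le M (e j) k)
        simp only [Finset.sum_const, Finset.card_univ, Fintype.card_fin, smul_eq_mul,
          mul_one] at this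
        have h2 : n + ∑ k, WB M (e i) k * WB M (e j) k ≤ 2 * n := by omega
        exact_mod_cast h2
  have hinj : ∀ r, (Finset.univ.filter (fun M => P M r)).card ≤ 2 ^ s := by
    intro r
    have h1 : (Finset.univ.filter (fun M => P M r)).card
        ≤ (Finset.univ : Finset (Fin s → Bool)).card := by
      refine Finset.card_le_card_of_injOn (fun M => ske (AB e M) r) (by simp) ?_
      intro M hM M' hM' heq
      by_contra hne
      obtain ⟨x, hx0, hx1⟩ := AB_sep hn0 e M M' hne
      simp only [Finset.coe_filter, Finset.mem_univ, true_and, Set.mem_ofPred_eq] at hM hM'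
      have a := (hM x).2
      have b := (hM' x).1
      simp only at heq
      rw [heq, hx0] at a
      have : 0 < (1 - ε) * qfM (AB e M') x := mul_pos (by linarith) hx1
      linarith
    simpa using h1
  have hcount : (2 : ℝ) / 3 * 2 ^ (p * m) ≤ 2 ^ s := by
    calc (2 : ℝ) / 3 * 2 ^ (p * m) = ∑ M : Fin p → Fin m → Bool, (2 : ℝ) / 3 := by
          simp [Finset.card_univ, pow_mul, mul_comm]
      _ ≤ ∑ M : Fin p → Fin m → Bool, ∑ r ∈ Finset.univ.filter (fun r : R => P M r), ρ r :=
          Finset.sum_le_sum fun M _ => hgood M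
      _ = ∑ r, ρ r * (Finset.univ.filter (fun M => P M r)).card := by
          simp only [Finset.sum_filter]
          rw [Finset.sum_comm]
          refine Finset.sum_congr rfl fun r _ => ?_
          rw [← Finset.sum_filter, Finset.sum_const, nsmul_eq_mul, mul_comm]
      _ ≤ ∑ r, ρ r * 2 ^ s :=
          Finset.sum_le_sum fun r _ =>
            mul_le_mul_of_nonneg_left (by exact_mod_cast hinj r) (hρ r)
      _ = 2 ^ s := by rw [← Finset.sum_mul, hρ1, one_mul]
  have hle : p * m ≤ s + 1 := by
    have h3 : (2 : ℝ) ^ (p * m) ≤ 2 ^ (s + 1) := by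
      rw [pow_succ]
      have : (0 : ℝ) < 2 ^ s := by positivity
      linarith
    exact (pow_le_pow_iff_right₀ (by norm_num)).1 h3
  have h5 : n * n ≤ 8 * s := by nlinarith
  have h6 : (n : ℝ) * n ≤ 8 * s := by exact_mod_cast h5
  nlinarith
end
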